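/- Let (Ω, 𝔉, P) be a probability space and Λ : Ω → [0,∞) an integrable random variable. For each n ≥ 1 let μ_n be the mixed Poisson distribution on ℕ given by μ_n({k}) = ∫_Ω (Λ(ω)/n)^k e^{−Λ(ω)/n} / k! dP(ω), k ∈ ℕ. Then the n-fold convolution μ_n^{∗n} converges weakly, as n → ∞, to the Poisson distribution with parameter ∫_Ω Λ dP. -/

import Mathlib

open MeasureTheory Filter

/-! Characteristic functions linearise the problem: that of a mixed Poisson law with mixing variable
`X` is `E exp (X (e^{it} - 1))`, so the `n`-fold convolution with mixing variable `Λ / n` has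
characteristic function `(E exp (W / n)) ^ n` with `W = Λ (e^{it} - 1)`. Since `W` has nonpositive
real part, `n (exp (W / n) - 1)` is dominated by `‖W‖`, hence `n (E exp (W / n) - 1) → E W` and the
power tends to `exp (E W)`, the characteristic function of the Poisson law with parameter `E Λ`.
Lévy's theorem on `ℝ` then gives weak convergence, which is inherited by the closed subspace `ℕ`,
where points are clopen. -/

section ExponentialLimit

open Topology

lemma norm_cexp_sub_one_le_of_re_nonpos {z : ℂ} (hz : z.re ≤ 0) :
    ‖Complex.exp z - 1‖ ≤ ‖z‖ := by
  have hderiv : ∀ w ∈ {w : ℂ | w.re ≤ 0}, ‖deriv Complex.exp w‖ ≤ 1 := fun w hw ↦ by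
    simpa [Complex.norm_exp] using hw
  have h0 : (0 : ℂ) ∈ {w : ℂ | w.re ≤ 0} := by simp
  simpa using (convex_halfSpace_re_le 0).norm_image_sub_le_of_norm_deriv_le
    (fun _ _ ↦ Complex.differentiableAt_exp) hderiv h0 hz

lemma norm_natCast_mul_cexp_div_sub_one_le {w : ℂ} (hw : w.re ≤ 0) (n : ℕ) :
    ‖n * (Complex.exp (w / n) - 1)‖ ≤ ‖w‖ := by
  rcases eq_or_ne n 0 with rfl | hn
  · simp
  have hre : (w / n).re ≤ 0 := by
    rw [Complex.div_natCast_re]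
    exact div_nonpos_of_nonpos_of_nonneg hw n.cast_nonneg
  calc ‖n * (Complex.exp (w / n) - 1)‖
      ≤ ‖(n : ℂ)‖ * ‖w / n‖ := by
        rw [norm_mul]
        gcongr
        exact norm_cexp_sub_one_le_of_re_nonpos hre
    _ = ‖w‖ := by rw [← norm_mul, mul_div_cancel₀ w (Nat.cast_ne_zero.2 hn)]

lemma tendsto_natCast_mul_cexp_div_sub_one (w : ℂ) :
    Tendsto (fun n : ℕ ↦ n * (Complex.exp (w / n) - 1)) atTop (𝓝 w) := by
  have hderiv : HasDerivAt (fun s : ℂ ↦ Complex.exp (w * s)) w 0 := by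
    simpa using ((hasDerivAt_id (0 : ℂ)).const_mul w).cexp
  have hinv : Tendsto (fun n : ℕ ↦ (n : ℂ)⁻¹) atTop (𝓝[≠] 0) :=
    tendsto_inv₀_cobounded'.comp tendsto_natCast_atTop_cobounded
  simpa [Function.comp_def, div_eq_mul_inv] using hderiv.tendsto_slope_zero.comp hinv

variable {Ω : Type*} [MeasurableSpace Ω] {P : Measure Ω} [IsProbabilityMeasure P] {W : Ω → ℂ}

lemma tendsto_natCast_mul_integral_cexp_div_sub_one (hW : Integrable W P)
    (hre : ∀ᵐ ω ∂P, (W ω).re ≤ 0) :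
    Tendsto (fun n : ℕ ↦ n * ((∫ ω, Complex.exp (W ω / n) ∂P) - 1)) atTop
      (𝓝 (∫ ω, W ω ∂P)) := by
  have hmeas (n : ℕ) : AEStronglyMeasurable (fun ω ↦ Complex.exp (W ω / n)) P :=
    Complex.continuous_exp.comp_aestronglyMeasurable (hW.div_const _).aestronglyMeasurable
  have hint (n : ℕ) : Integrable (fun ω ↦ Complex.exp (W ω / n)) P := by
    refine .of_bound (hmeas n) 1 (hre.mono fun ω hω ↦ ?_)
    rw [Complex.norm_exp, Complex.div_natCast_re, Real.exp_le_one_iff]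
    exact div_nonpos_of_nonpos_of_nonneg hω n.cast_nonneg
  have hintegral (n : ℕ) : n * ((∫ ω, Complex.exp (W ω / n) ∂P) - 1) =
      ∫ ω, n * (Complex.exp (W ω / n) - 1) ∂P := by
    rw [integral_const_mul, integral_sub (hint n) (integrable_const 1)]
    simp
  simp_rw [hintegral]
  exact tendsto_integral_of_dominated_convergence (fun ω ↦ ‖W ω‖)
    (fun n ↦ ((hmeas n).sub aestronglyMeasurable_const).const_mul _) hW.norm
    (fun n ↦ hre.mono fun ω hω ↦ norm_natCast_mul_cexp_div_sub_one_le hω n)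
    (ae_of_all _ fun ω ↦ tendsto_natCast_mul_cexp_div_sub_one (W ω))

lemma tendsto_integral_cexp_div_pow (hW : Integrable W P) (hre : ∀ᵐ ω ∂P, (W ω).re ≤ 0) :
    Tendsto (fun n : ℕ ↦ (∫ ω, Complex.exp (W ω / n) ∂P) ^ n) atTop
      (𝓝 (Complex.exp (∫ ω, W ω ∂P))) := by
  simpa only [add_sub_cancel] using Complex.tendsto_one_add_pow_exp_of_tendsto
    (tendsto_natCast_mul_integral_cexp_div_sub_one hW hre)

end ExponentialLimit

section WeakConvergence

open Topology

lemma tendsto_of_tendsto_map_of_isClosedEmbedding {X Y ι : Type*}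
    [TopologicalSpace X] [MeasurableSpace X] [BorelSpace X]
    [TopologicalSpace Y] [MeasurableSpace Y] [BorelSpace Y] [NormalSpace Y]
    {f : X → Y} (hf : IsClosedEmbedding f) {L : Filter ι}
    {ν : ι → ProbabilityMeasure X} {ν₀ : ProbabilityMeasure X}
    (h : Tendsto (fun i ↦ (ν i).map hf.measurable.aemeasurable) L
      (𝓝 (ν₀.map hf.measurable.aemeasurable))) :
    Tendsto ν L (𝓝 ν₀) := by
  rw [ProbabilityMeasure.tendsto_nhds_iff_toFiniteMeasure_tendsto_nhds] at h ⊢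
  have hmap : IsEmbedding fun m : FiniteMeasure X ↦ m.map f :=
    FiniteMeasure.Topology.IsClosedEmbedding.isEmbedding_map_finiteMeasure f hf
  exact hmap.tendsto_nhds_iff.2 h

lemma tendsto_measure_of_tendsto_charFun_map_natCast {ν : ℕ → Measure ℕ}
    [∀ n, IsProbabilityMeasure (ν n)] {ν₀ : Measure ℕ} [IsProbabilityMeasure ν₀]
    (h : ∀ t, Tendsto (fun n ↦ charFun ((ν n).map (Nat.cast : ℕ → ℝ)) t) atTop
      (𝓝 (charFun (ν₀.map (Nat.cast : ℕ → ℝ)) t))) (s : Set ℕ) :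
    Tendsto (fun n ↦ ν n s) atTop (𝓝 (ν₀ s)) := by
  let toProb (m : Measure ℕ) [IsProbabilityMeasure m] : ProbabilityMeasure ℕ := ⟨m, inferInstance⟩
  have hweak : Tendsto (fun n ↦ toProb (ν n)) atTop (𝓝 (toProb ν₀)) :=
    tendsto_of_tendsto_map_of_isClosedEmbedding Nat.isClosedEmbedding_coe_real
      (ProbabilityMeasure.tendsto_of_tendsto_charFun h)
  exact ProbabilityMeasure.tendsto_measure_of_null_frontier_of_tendsto' hweak (by simp)

end WeakConvergence

section CharFun

lemma integral_bind {α β E : Type*} [MeasurableSpace α] [MeasurableSpace β]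
    [NormedAddCommGroup E] [NormedSpace ℝ E] {m : Measure α} {κ : α → Measure β}
    (hκ : AEMeasurable κ m) {f : β → E} (hf : Integrable f (m.bind κ)) :
    ∫ b, f b ∂(m.bind κ) = ∫ a, ∫ b, f b ∂(κ a) ∂m := by
  let η : ProbabilityTheory.Kernel α β := ⟨hκ.mk κ, hκ.measurable_mk⟩
  have hbind : m.bind κ = (η.comp (.const Unit m)) () := by
    rw [Measure.bind_congr_right hκ.ae_eq_mk]
    rfl
  rw [hbind] at hf ⊢
  rw [ProbabilityTheory.Kernel.integral_comp hf]
  exact integral_congr_ae (hκ.ae_eq_mk.mono fun a ha ↦ by simp [η, ha])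

lemma charFun_map_natCast_sum_pi {ι : Type*} [Fintype ι] (ν : ι → Measure ℕ)
    [∀ i, IsProbabilityMeasure (ν i)] (t : ℝ) :
    charFun (((Measure.pi ν).map fun x ↦ ∑ i, x i).map (Nat.cast : ℕ → ℝ)) t =
      ∏ i, charFun ((ν i).map (Nat.cast : ℕ → ℝ)) t := by
  have hprob (i : ι) : IsProbabilityMeasure ((ν i).map (Nat.cast : ℕ → ℝ)) :=
    Measure.isProbabilityMeasure_map .of_discrete
  have hmap : ((Measure.pi ν).map fun x ↦ ∑ i, x i).map (Nat.cast : ℕ → ℝ) =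
      (Measure.pi fun i ↦ (ν i).map (Nat.cast : ℕ → ℝ)).map fun x ↦ ∑ i, x i := by
    rw [← Measure.pi_map_pi (fun _ ↦ .of_discrete), Measure.map_map .of_discrete (by fun_prop),
      Measure.map_map (by fun_prop) (by fun_prop)]
    simp [Function.comp_def]
  rw [hmap, ProbabilityTheory.charFun_map_sum_pi_eq_prod, Finset.prod_apply]

end CharFun

section MixedPoisson

open ProbabilityTheory Topology
open scoped NNReal

lemma measurable_poissonMeasure : Measurable poissonMeasure := by
  refine Measure.measurable_of_measurable_coe _ fun s hs ↦ ?_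
  simp_rw [poissonMeasure, Measure.sum_apply _ hs, Measure.smul_apply, smul_eq_mul]
  exact .tsum fun k ↦ by fun_prop

/-- The mixed Poisson distribution with random parameter `X`: the law of a count which, given `ω`,
is Poisson distributed with parameter `X ω`. It is `0` when `X` is not a.e. measurable. -/
noncomputable def mixedPoissonMeasure {Ω : Type*} [MeasurableSpace Ω] (P : Measure Ω)
    (X : Ω → ℝ≥0) : Measure ℕ :=
  P.bind fun ω ↦ poissonMeasure (X ω)

variable {Ω : Type*} [MeasurableSpace Ω] {P : Measure Ω} {X : Ω → ℝ≥0}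

lemma mixedPoissonMeasure_singleton (hX : AEMeasurable X P) (k : ℕ) :
    mixedPoissonMeasure P X {k} =
      ∫⁻ ω, ENNReal.ofReal (Real.exp (-X ω) * X ω ^ k / (Nat.factorial k)) ∂P := by
  rw [mixedPoissonMeasure, Measure.bind_apply (measurableSet_singleton k)
    (measurable_poissonMeasure.comp_aemeasurable' hX)]
  simp_rw [poissonMeasure_singleton]

variable [IsProbabilityMeasure P]

lemma isProbabilityMeasure_mixedPoissonMeasure (hX : AEMeasurable X P) :
    IsProbabilityMeasure (mixedPoissonMeasure P X) :=
  isProbabilityMeasure_bind (measurable_poissonMeasure.comp_aemeasurable hX)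
    (ae_of_all _ fun _ ↦ inferInstance)

lemma charFun_map_natCast_mixedPoissonMeasure (hX : AEMeasurable X P) (t : ℝ) :
    charFun ((mixedPoissonMeasure P X).map (Nat.cast : ℕ → ℝ)) t =
      ∫ ω, Complex.exp (X ω * (Complex.exp (t * Complex.I) - 1)) ∂P := by
  have := isProbabilityMeasure_mixedPoissonMeasure hX
  have hint : Integrable (fun k : ℕ ↦ Complex.exp (inner ℝ (k : ℝ) t * Complex.I))
      (mixedPoissonMeasure P X) :=
    .of_bound .of_discrete 1 (ae_of_all _ fun k ↦ (Complex.norm_exp_ofReal_mul_I _).le)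
  calc charFun ((mixedPoissonMeasure P X).map (Nat.cast : ℕ → ℝ)) t
      = ∫ k : ℕ, Complex.exp (inner ℝ (k : ℝ) t * Complex.I) ∂(mixedPoissonMeasure P X) := by
        rw [charFun_apply, integral_map .of_discrete (by fun_prop)]
    _ = ∫ ω, ∫ k : ℕ, Complex.exp (inner ℝ (k : ℝ) t * Complex.I) ∂(poissonMeasure (X ω)) ∂P :=
        integral_bind (measurable_poissonMeasure.comp_aemeasurable hX) hint
    _ = ∫ ω, charFun ((poissonMeasure (X ω)).map (Nat.cast : ℕ → ℝ)) t ∂P := by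
        congr with ω
        rw [charFun_apply, integral_map .of_discrete (by fun_prop)]
    _ = ∫ ω, Complex.exp (X ω * (Complex.exp (t * Complex.I) - 1)) ∂P := by
        simp_rw [charFun_map_cast_poissonMeasure]

lemma tendsto_charFun_mixedPoissonMeasure_div_pow (hX : Integrable (fun ω ↦ (X ω : ℝ)) P) (t : ℝ) :
    Tendsto (fun n : ℕ ↦ charFun
        ((mixedPoissonMeasure P fun ω ↦ X ω / n).map (Nat.cast : ℕ → ℝ)) t ^ n) atTop
      (𝓝 (charFun ((poissonMeasure (∫ ω, (X ω : ℝ) ∂P).toNNReal).map (Nat.cast : ℕ → ℝ)) t)) := by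
  set z : ℂ := Complex.exp (t * Complex.I) - 1 with hz
  have hzre : z.re ≤ 0 := by simpa [hz, Complex.exp_ofReal_mul_I_re] using Real.cos_le_one t
  have hre (ω : Ω) : ((X ω : ℂ) * z).re ≤ 0 := by
    simpa using mul_nonpos_of_nonneg_of_nonpos (X ω).coe_nonneg hzre
  have hXmeas : AEMeasurable X P := aemeasurable_coe_nnreal_real_iff.1 hX.aemeasurable
  have hchar (n : ℕ) : charFun ((mixedPoissonMeasure P fun ω ↦ X ω / n).map (Nat.cast : ℕ → ℝ)) t =
      ∫ ω, Complex.exp (X ω * z / n) ∂P := by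
    rw [charFun_map_natCast_mixedPoissonMeasure (hXmeas.div_const _)]
    simp only [NNReal.coe_div, NNReal.coe_natCast, Complex.ofReal_div, Complex.ofReal_natCast,
      div_mul_eq_mul_div, hz]
  have hlimit : charFun ((poissonMeasure (∫ ω, (X ω : ℝ) ∂P).toNNReal).map (Nat.cast : ℕ → ℝ)) t =
      Complex.exp (∫ ω, X ω * z ∂P) := by
    rw [charFun_map_cast_poissonMeasure,
      Real.coe_toNNReal _ (integral_nonneg fun ω ↦ (X ω).coe_nonneg), integral_mul_const,
      integral_complex_ofReal]
  simp_rw [hchar, hlimit]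
  exact tendsto_integral_cexp_div_pow (hX.ofReal.mul_const z) (ae_of_all _ hre)

theorem tendsto_sum_pi_mixedPoissonMeasure_div (hX : Integrable (fun ω ↦ (X ω : ℝ)) P)
    (s : Set ℕ) :
    Tendsto (fun n : ℕ ↦
        ((Measure.pi fun _ : Fin n ↦ mixedPoissonMeasure P fun ω ↦ X ω / n).map
          fun x ↦ ∑ i, x i) s) atTop
      (𝓝 (poissonMeasure (∫ ω, (X ω : ℝ) ∂P).toNNReal s)) := by
  have hXmeas : AEMeasurable X P := aemeasurable_coe_nnreal_real_iff.1 hX.aemeasurable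
  have (n : ℕ) : IsProbabilityMeasure (mixedPoissonMeasure P fun ω ↦ X ω / n) :=
    isProbabilityMeasure_mixedPoissonMeasure (hXmeas.div_const _)
  have (n : ℕ) : IsProbabilityMeasure
      ((Measure.pi fun _ : Fin n ↦ mixedPoissonMeasure P fun ω ↦ X ω / n).map
        fun x ↦ ∑ i, x i) :=
    Measure.isProbabilityMeasure_map (by fun_prop)
  refine tendsto_measure_of_tendsto_charFun_map_natCast (fun t ↦ ?_) s
  simpa only [charFun_map_natCast_sum_pi, Finset.prod_const, Finset.card_univ, Fintype.card_fin]
    using tendsto_charFun_mixedPoissonMeasure_div_pow hX t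

end MixedPoisson

/-- Central limit theorem for Cox processes, single-region core: if `μ n` is the
mixed Poisson distribution with mixing variable `Λ/n`, then the `n`-fold
convolution of `μ n` (the law of the sum of `n` i.i.d. copies) converges weakly,
i.e. pointwise in the probability mass functions, to the Poisson distribution
with parameter `∫ Λ dP`. -/
theorem mixed_poisson_convolution_tendsto_poisson {Ω : Type*} [MeasurableSpace Ω]
    (P : Measure Ω) [IsProbabilityMeasure P]
    (Λ : Ω → ℝ) (hΛmeas : Measurable Λ) (hΛ0 : ∀ ω, 0 ≤ Λ ω)
    (hΛint : Integrable Λ P)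
    (μ : ℕ → Measure ℕ) (hμprob : ∀ n, IsProbabilityMeasure (μ n))
    (hμ : ∀ n k, μ n {k} =
      ∫⁻ ω, ENNReal.ofReal
        ((Λ ω / n) ^ k * Real.exp (-(Λ ω / n)) / (Nat.factorial k)) ∂P) :
    ∀ k : ℕ,
      Tendsto
        (fun n : ℕ =>
          ((Measure.pi fun _ : Fin n => μ n).map fun x => ∑ i, x i) {k})
        atTop
        (nhds (ENNReal.ofReal
          ((∫ ω, Λ ω ∂P) ^ k * Real.exp (-(∫ ω, Λ ω ∂P)) / (Nat.factorial k)))) := by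
  intro k
  have hcoe (ω : Ω) : ((Λ ω).toNNReal : ℝ) = Λ ω := Real.coe_toNNReal _ (hΛ0 ω)
  have hlaw (n : ℕ) : μ n = mixedPoissonMeasure P fun ω ↦ (Λ ω).toNNReal / n := by
    refine Measure.ext_of_singleton fun k ↦ ?_
    rw [hμ, mixedPoissonMeasure_singleton (hΛmeas.real_toNNReal.div_const _).aemeasurable]
    simp only [NNReal.coe_div, NNReal.coe_natCast, hcoe, mul_comm]
  have hlim := tendsto_sum_pi_mixedPoissonMeasure_div (P := P)
    (X := fun ω ↦ (Λ ω).toNNReal) (by simpa only [hcoe] using hΛint) {k}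
  simpa only [hlaw, ProbabilityTheory.poissonMeasure_singleton, hcoe,
    Real.coe_toNNReal _ (integral_nonneg hΛ0), mul_comm] using hlim
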